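/- Let R be a commutative ring and M an R-module with a finite presentation R^m → R^n → M → 0 where m ≥ n. Let s be a positive integer and N an R-submodule of M generated by s elements. Then Fitt_{R,0}(M/N) ⊆ Fitt_{R,s}(M). -/

import Mathlib

/-- The `i`-th Fitting ideal attached to a presentation matrix `A` (an `n × m` matrix):
the ideal of `R` generated by all `(n-i) × (n-i)` minors of `A`. -/
def matrixFitt {R : Type*} [CommRing R] {n m : ℕ} (A : Matrix (Fin n) (Fin m) R) (i : ℕ) :
    Ideal R :=
  Ideal.span {x | ∃ (f : Fin (n - i) → Fin n) (g : Fin (n - i) → Fin m),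
    x = Matrix.det (Matrix.of fun a b => A (f a) (g b))}

/-- `A` is a presentation matrix of the `R`-module `M`, i.e. there is an exact sequence
`R^m → R^n → M → 0` with first map given by `A`. -/
def IsPresentation (R M : Type*) [CommRing R] [AddCommGroup M] [Module R M]
    {n m : ℕ} (A : Matrix (Fin n) (Fin m) R) : Prop :=
  ∃ g : (Fin n → R) →ₗ[R] M, Function.Surjective g ∧
    LinearMap.ker g = LinearMap.range (Matrix.toLin' A)

/-- The ideal generated by the `p × p` minors of all matrices whose columns lie in `K`. -/
def minorIdeal {R ι : Type*} [CommRing R] (p : ℕ) (K : Submodule R (ι → R)) : Ideal R :=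
  Ideal.span {x | ∃ (f : Fin p → ι) (k : Fin p → ι → R), (∀ b, k b ∈ K) ∧
    x = Matrix.det (Matrix.of fun a b => k b (f a))}

namespace minorIdeal

open Matrix

variable {R ι : Type*} [CommRing R]

theorem det_mem {p : ℕ} {K : Submodule R (ι → R)} (f : Fin p → ι) (k : Fin p → ι → R)
    (hk : ∀ b, k b ∈ K) : det (of fun a b => k b (f a)) ∈ minorIdeal p K :=
  Ideal.subset_span ⟨f, k, hk, rfl⟩

theorem zero_eq_top (K : Submodule R (ι → R)) : minorIdeal 0 K = ⊤ := by
  rw [Ideal.eq_top_iff_one]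
  have h := det_mem (K := K) (p := 0) Fin.elim0 Fin.elim0 (fun b => b.elim0)
  rwa [det_fin_zero] at h

end minorIdeal

namespace Matrix

variable {R : Type*} [CommRing R]

/-- Laplace expansion: if an ideal contains all maximal minors of the first `k` rows, it contains
the determinant. -/
theorem det_mem_of_castAdd_minors_mem (I : Ideal R) {k : ℕ} :
    ∀ {r : ℕ} (M : Matrix (Fin (k + r)) (Fin (k + r)) R),
      (∀ g : Fin k → Fin (k + r), det (M.submatrix (Fin.castAdd r) g) ∈ I) → det M ∈ I
  | 0, M, h => by simpa using h id
  | r + 1, M, h => by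
    rw [det_succ_row (n := k + r) M (Fin.last _)]
    refine Ideal.sum_mem _ fun j _ => Ideal.mul_mem_left _ _ ?_
    refine det_mem_of_castAdd_minors_mem I _ fun g => ?_
    convert h (fun a => j.succAbove (g a)) using 2
    ext a b
    simp only [submatrix_apply, Fin.succAbove_last]
    rfl

theorem det_mem_of_inl_minors_mem (I : Ideal R) {k r : ℕ}
    (M : Matrix (Fin k ⊕ Fin r) (Fin k ⊕ Fin r) R)
    (h : ∀ g : Fin k → Fin k ⊕ Fin r, det (M.submatrix Sum.inl g) ∈ I) : det M ∈ I := by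
  rw [← det_submatrix_equiv_self finSumFinEquiv.symm M]
  refine det_mem_of_castAdd_minors_mem I _ fun g => ?_
  convert h (fun a => finSumFinEquiv.symm (g a)) using 2
  ext a b
  simp

/-- A weak form of the Cauchy–Binet formula. -/
theorem det_mul_mem_of_minors_mem (I : Ideal R) {m n : Type*} [Fintype m] [DecidableEq m]
    [Fintype n] (A : Matrix m n R) (Y : Matrix n m R)
    (h : ∀ g : m → n, det (A.submatrix id g) ∈ I) : det (A * Y) ∈ I := by
  classical
  have key : det (A * Y) = ∑ g : m → n, (∏ b, Y (g b) b) * det (A.submatrix id g) := by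
    rw [← det_transpose]
    have h1 : (A * Y)ᵀ = fun b => ∑ j, Y j b • (Aᵀ j) := by
      ext b a
      simp [mul_apply, mul_comm]
    rw [h1]
    refine ((detRowAlternating (n := m) (R := R)).toMultilinearMap.map_sum _).trans ?_
    refine Finset.sum_congr rfl fun g _ => ?_
    refine (MultilinearMap.map_smul_univ _ _ _).trans ?_
    rw [smul_eq_mul, ← det_transpose (A.submatrix id g)]
    rfl
  rw [key]
  exact Ideal.sum_mem _ fun g _ => Ideal.mul_mem_left _ _ (h g)

end Matrix

namespace minorIdeal

open Matrix

variable {R ι : Type*} [CommRing R]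

theorem succ_sup_span_singleton_le (p : ℕ) (K : Submodule R (ι → R)) (x : ι → R) :
    minorIdeal (p + 1) (K ⊔ Submodule.span R {x}) ≤ minorIdeal p K := by
  refine Ideal.span_le.2 ?_
  rintro _ ⟨f, v, hv, rfl⟩
  have hv' : ∀ b, ∃ k ∈ K, ∃ c : R, k - c • x = v b := fun b => by
    obtain ⟨k, hk, y, hy, h⟩ := Submodule.mem_sup.1 (hv b)
    obtain ⟨c, rfl⟩ := Submodule.mem_span_singleton.1 hy
    exact ⟨k, hk, -c, by simpa using h⟩
  choose k hk c hc using hv'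
  have key : det (of fun a b => v b (f a)) =
      det (fromBlocks (of fun a b => k b (f a)) (of fun a (_ : Fin 1) => x (f a))
        (of fun _ b => c b) 1) := by
    rw [det_fromBlocks_one₂₂]
    congr 1
    ext a b
    simp [← hc, mul_apply, mul_comm]
  rw [SetLike.mem_coe, key]
  refine det_mem_of_inl_minors_mem _ _ fun g => ?_
  by_cases hg : Function.Injective g
  · obtain ⟨b₀, hb₀⟩ : ∃ b₀, ∀ b, b ≠ b₀ → ∃ c, g b = Sum.inl c := by
      by_cases h : ∃ b₀, g b₀ = Sum.inr 0
      · obtain ⟨b₀, h⟩ := h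
        refine ⟨b₀, fun b hb => ?_⟩
        rcases hgb : g b with c | c
        · exact ⟨c, rfl⟩
        · exact absurd (hg (by rw [hgb, h, Subsingleton.elim c 0])) hb
      · refine ⟨0, fun b _ => ?_⟩
        rcases hgb : g b with c | c
        · exact ⟨c, rfl⟩
        · exact absurd ⟨b, by rw [hgb, Subsingleton.elim c 0]⟩ h
    have hb (b : Fin p) : ∃ c, g (b₀.succAbove b) = Sum.inl c := hb₀ _ (Fin.succAbove_ne _ _)
    choose e he using hb
    rw [det_succ_column _ b₀]
    refine Ideal.sum_mem _ fun i _ => Ideal.mul_mem_left _ _ ?_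
    convert det_mem (K := K) (fun a => f (i.succAbove a)) (fun b => k (e b)) (fun b => hk _) using 2
    ext a b
    simp [he]
  · obtain ⟨b, b', hbb, hne⟩ : ∃ b b', g b = g b' ∧ b ≠ b' := by
      simpa [Function.Injective] using hg
    rw [det_zero_of_column_eq hne fun a => by simp [hbb]]
    exact zero_mem _

theorem sup_span_singleton_le (p : ℕ) (K : Submodule R (ι → R)) (x : ι → R) :
    minorIdeal p (K ⊔ Submodule.span R {x}) ≤ minorIdeal (p - 1) K := by
  cases p with
  | zero => simp [zero_eq_top]
  | succ p => exact succ_sup_span_singleton_le p K x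

theorem sup_span_range_le {s : ℕ} (p : ℕ) (K : Submodule R (ι → R)) (x : Fin s → ι → R) :
    minorIdeal p (K ⊔ Submodule.span R (Set.range x)) ≤ minorIdeal (p - s) K := by
  induction s generalizing p with
  | zero => simp
  | succ s ih =>
    have h : K ⊔ Submodule.span R (Set.range x) =
        (K ⊔ Submodule.span R (Set.range (Fin.tail x))) ⊔ Submodule.span R {x 0} := by
      rw [← Fin.cons_self_tail x, Fin.range_cons, Submodule.span_insert, sup_assoc]
      simp [sup_comm]
    rw [h]
    refine (sup_span_singleton_le p _ _).trans ((ih (p - 1) (Fin.tail x)).trans ?_)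
    rw [Nat.sub_sub, Nat.add_comm 1 s]

/-- The ideal of maximal minors of the kernel of a surjection from a finite free module only
depends on the target of the surjection. -/
theorem ker_le_ker {Q : Type*} [AddCommGroup Q] [Module R Q] {n n' : ℕ}
    (g : (Fin n → R) →ₗ[R] Q) (hg : Function.Surjective g)
    (g' : (Fin n' → R) →ₗ[R] Q) (hg' : Function.Surjective g') :
    minorIdeal n' (LinearMap.ker g') ≤ minorIdeal n (LinearMap.ker g) := by
  obtain ⟨φ, hφ⟩ := Module.projective_lifting_property g g' hg
  obtain ⟨ψ, hψ⟩ := Module.projective_lifting_property g' g hg'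
  replace hφ : ∀ v, g (φ v) = g' v := fun v => LinearMap.congr_fun hφ v
  replace hψ : ∀ v, g' (ψ v) = g v := fun v => LinearMap.congr_fun hψ v
  refine Ideal.span_le.2 ?_
  rintro _ ⟨f, k, hk, rfl⟩
  set D : Matrix (Fin n') (Fin n') R := of fun a b => k b a with hD
  have hf : (of fun a b => k b (f a)) = (1 : Matrix (Fin n') (Fin n') R).submatrix f id * D := by
    ext a b
    simp [mul_apply, hD, one_apply]
  rw [SetLike.mem_coe, hf, det_mul]
  refine Ideal.mul_mem_left _ _ ?_
  set P := LinearMap.toMatrix' φ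
  set S := LinearMap.toMatrix' ψ
  have hdet : det D = det (fromBlocks (1 - P * S) (P * D) (-S) D) := by
    have h1 : fromBlocks (1 - P * S) (P * D) (-S) D =
        fromBlocks 1 P 0 1 * fromBlocks 1 0 (-S) D := by
      simp [fromBlocks_multiply, sub_eq_add_neg]
    rw [h1, det_mul, det_fromBlocks_zero₂₁, det_fromBlocks_zero₁₂]
    simp
  rw [hdet]
  refine det_mem_of_inl_minors_mem _ _ fun e => ?_
  let col : Fin n ⊕ Fin n' → Fin n → R :=
    Sum.elim (fun j => Pi.single j 1 - φ (ψ (Pi.single j 1))) fun j => φ (k j)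
  have hcol : ∀ j, col j ∈ LinearMap.ker g := by
    rintro (j | j)
    · simp [col, hφ, hψ]
    · simpa [col, hφ] using hk j
  convert det_mem id (fun b => col (e b)) (fun b => hcol _) using 2
  ext a b
  rcases h : e b with j | j
  · simp [h, col, P, S, ← LinearMap.toMatrix'_comp, LinearMap.toMatrix'_apply, one_apply,
      Pi.single_apply]
  · have hP : P *ᵥ k j = φ (k j) := LinearMap.toMatrix'_mulVec φ (k j)
    simp only [submatrix_apply, h, fromBlocks_apply₁₂, of_apply, id, col, Sum.elim_inr, ← hP]
    rfl

theorem range_toLin'_le_matrixFitt {n m : ℕ} (A : Matrix (Fin n) (Fin m) R) (i : ℕ) :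
    minorIdeal (n - i) (LinearMap.range (toLin' A)) ≤ matrixFitt A i := by
  refine Ideal.span_le.2 ?_
  rintro _ ⟨f, k, hk, rfl⟩
  choose y hy using hk
  have h : (of fun a b => k b (f a)) = A.submatrix f id * of fun j b => y b j := by
    ext a b
    simp [← hy, mul_apply, mulVec, dotProduct]
  rw [SetLike.mem_coe, h]
  exact det_mul_mem_of_minors_mem _ _ _ fun e => Ideal.subset_span ⟨f, e, rfl⟩

theorem matrixFitt_le_range_toLin' {n m : ℕ} (A : Matrix (Fin n) (Fin m) R) (i : ℕ) :
    matrixFitt A i ≤ minorIdeal (n - i) (LinearMap.range (toLin' A)) := by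
  refine Ideal.span_le.2 ?_
  rintro _ ⟨f, e, rfl⟩
  exact det_mem f (fun b => A.col (e b)) fun b =>
    LinearMap.mem_range.2 ⟨Pi.single (e b) 1, by simp⟩

end minorIdeal

/-- Let `R` be a commutative ring and `M` an `R`-module with a finite presentation
`R^m → R^n → M → 0` where `m ≥ n`.  Let `s` be a positive integer and `N` an `R`-submodule of
`M` generated by `s` elements.  Then `Fitt_{R,0}(M/N) ⊆ Fitt_{R,s}(M)`. -/
theorem fitt_quotient_le_higher_fitt
    {R M : Type*} [CommRing R] [AddCommGroup M] [Module R M]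
    {n m : ℕ} (hnm : n ≤ m) (A : Matrix (Fin n) (Fin m) R) (hA : IsPresentation R M A)
    {s : ℕ} (hs : 0 < s) (x : Fin s → M) (N : Submodule R M)
    (hN : N = Submodule.span R (Set.range x))
    {n' m' : ℕ} (hnm' : n' ≤ m') (B : Matrix (Fin n') (Fin m') R)
    (hB : IsPresentation R (M ⧸ N) B) :
    matrixFitt B 0 ≤ matrixFitt A s := by
  obtain ⟨g, hg, hgA⟩ := hA
  obtain ⟨g', hg', hgB⟩ := hB
  choose y hy using fun t => hg (x t)
  have hker : LinearMap.ker (N.mkQ ∘ₗ g) =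
      LinearMap.ker g ⊔ Submodule.span R (Set.range y) := by
    have hmap : N = (Submodule.span R (Set.range y)).map g := by
      rw [hN, Submodule.map_span, ← Set.range_comp]
      congr 2
      exact funext fun t => (hy t).symm
    rw [LinearMap.ker_comp, Submodule.ker_mkQ, sup_comm, ← Submodule.comap_map_eq, ← hmap]
  calc matrixFitt B 0 ≤ minorIdeal n' (LinearMap.ker g') :=
        hgB ▸ minorIdeal.matrixFitt_le_range_toLin' B 0
    _ ≤ minorIdeal n (LinearMap.ker (N.mkQ ∘ₗ g)) :=
        minorIdeal.ker_le_ker _ (N.mkQ_surjective.comp hg) _ hg'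
    _ ≤ minorIdeal (n - s) (LinearMap.ker g) := hker ▸ minorIdeal.sup_span_range_le _ _ _
    _ ≤ matrixFitt A s := hgA ▸ minorIdeal.range_toLin'_le_matrixFitt A s
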